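/- Let G be a connected simple graph on a finite vertex set V with n = |V|, and let f = f_G(V) = 2 + e(G) − n, where e(G) is the number of edges of G (for a planar embedding of G, f is the number of faces). Then the alternating sum of total island counts over all subsets of at least 3 vertices recovers χ − 2f with χ = 2: Σ_{S ⊆ V, |S| ≥ 3} (−1)^{|S|} · β_{G[S]}(−1) = 2 − 2·f. -/

import Mathlib

open Polynomial

/-- `islandF G S` is the quantity `f_G(S) = 2·c_G(S) + e_G(S) − |S|`, where `c_G(S)`
and `e_G(S)` are the numbers of connected components and edges of the induced
subgraph `G[S]`.  For a planar graph it equals the total number of faces of a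
planar embedding of `G[S]`, summed over connected components. -/
noncomputable def islandF {V : Type*} [Fintype V] [DecidableEq V]
    (G : SimpleGraph V) (S : Finset V) : ℤ :=
  2 * Nat.card ((G.induce (S : Set V)).ConnectedComponent)
    + Nat.card ((G.induce (S : Set V)).edgeSet) - S.card

/-- The total island boundary polynomial `β_G(x) = Σ_{∅ ≠ S ⊆ V} f_G(S)·x^{|S|−1}`. -/
noncomputable def islandPoly {V : Type*} [Fintype V] [DecidableEq V]
    (G : SimpleGraph V) : Polynomial ℤ :=
  ∑ S ∈ Finset.univ.powerset.filter (fun S : Finset V => S.Nonempty),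
    Polynomial.C (islandF G S) * Polynomial.X ^ (S.card - 1)

/-!
Summed over all `S ⊆ V`, the signs `(-1) ^ |S|` turn `β_{G[S]}(-1) = -∑_{T ⊆ S} (-1) ^ |T| f_G(T)`
into an instance of Möbius inversion on the Boolean lattice, so the full alternating sum is
`-f_G(V)`. The sets of size at most two contribute `0` (empty set), `-n` (vertices) and `e(G)`
(pairs: `β_{G[{u, v}]}(-1)` is `1` on edges and `0` on non-edges), and
`-f_G(V) + n - e(G) = 2 c(G) - 2 f_G(V)`.
-/

section PowersetSums

open Finset

variable {α β M : Type*} [AddCommMonoid M]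

lemma powerset_map_eq_map_powerset (f : α ↪ β) (s : Finset α) :
    (s.map f).powerset = s.powerset.map (mapEmbedding f).toEmbedding := by
  classical
  ext T
  simp [map_eq_image, powerset_image]

lemma sum_powerset_map (f : α ↪ β) (s : Finset α) (g : Finset β → M) :
    ∑ T ∈ (s.map f).powerset, g T = ∑ T ∈ s.powerset, g (T.map f) := by
  rw [powerset_map_eq_map_powerset, sum_map]
  rfl

lemma sum_powerset_eq_sum_range_powersetCard_add (s : Finset α) (g : Finset α → M) (k : ℕ) :
    ∑ T ∈ s.powerset, g T
      = ∑ j ∈ range k, ∑ T ∈ s.powersetCard j, g T + ∑ T ∈ s.powerset with k ≤ #T, g T := by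
  have sum_small : ∑ T ∈ s.powerset with ¬ k ≤ #T, g T
      = ∑ j ∈ range k, ∑ T ∈ s.powersetCard j, g T := by
    have card_lt : ∀ T ∈ {T ∈ s.powerset | ¬ k ≤ #T}, #T ∈ range k :=
      fun T hT => mem_range.2 (not_le.1 (mem_filter.1 hT).2)
    rw [← sum_fiberwise_of_maps_to card_lt]
    refine sum_congr rfl fun j hj => sum_congr ?_ fun _ _ => rfl
    ext T
    simp only [mem_filter, mem_powerset, mem_powersetCard, mem_range] at hj ⊢
    grind
  rw [← sum_small, add_comm, sum_filter_add_sum_filter_not]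

lemma sum_powerset_neg_one_pow_card_smul_sum_powerset {A : Type*} [AddCommGroup A]
    (s : Finset α) (h : Finset α → A) :
    ∑ T ∈ s.powerset, (-1 : ℤ) ^ #T • ∑ U ∈ T.powerset, (-1 : ℤ) ^ #U • h U = h s := by
  classical
  induction s using Finset.induction_on generalizing h with
  | empty => simp
  | insert a s ha ih =>
    have term_insert : ∀ T ∈ s.powerset,
        (-1 : ℤ) ^ #(insert a T) • ∑ U ∈ (insert a T).powerset, (-1 : ℤ) ^ #U • h U
          = -((-1 : ℤ) ^ #T • ∑ U ∈ T.powerset, (-1 : ℤ) ^ #U • h U)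
            + (-1 : ℤ) ^ #T • ∑ U ∈ T.powerset, (-1 : ℤ) ^ #U • h (insert a U) := by
      intro T hT
      have haT : a ∉ T := notMem_mono (mem_powerset.1 hT) ha
      have sign_insert : ∀ U ∈ T.powerset, (-1 : ℤ) ^ #(insert a U) • h (insert a U)
          = -((-1 : ℤ) ^ #U • h (insert a U)) := by
        intro U hU
        rw [card_insert_of_notMem (notMem_mono (mem_powerset.1 hU) haT), pow_succ, mul_neg_one,
          neg_smul]
      rw [sum_powerset_insert haT, sum_congr rfl sign_insert, sum_neg_distrib,
        card_insert_of_notMem haT, pow_succ, mul_neg_one, neg_smul, smul_add, smul_neg, neg_add,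
        neg_neg]
    rw [sum_powerset_insert ha, sum_congr rfl term_insert, sum_add_distrib, sum_neg_distrib,
      add_neg_cancel_left, ih fun U => h (insert a U)]

end PowersetSums

section Graphs

open Finset

variable {V W : Type*} {G : SimpleGraph V}

lemma nat_card_connectedComponent_eq_one (hG : G.Connected) :
    Nat.card G.ConnectedComponent = 1 := by
  have := hG.nonempty
  have := hG.preconnected.subsingleton_connectedComponent
  exact Nat.card_unique

lemma nat_card_connectedComponent_bot :
    Nat.card (⊥ : SimpleGraph V).ConnectedComponent = Nat.card V :=
  (Nat.card_congr (Equiv.ofBijective (⊥ : SimpleGraph V).connectedComponentMk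
    ⟨fun u v huv => by simpa using huv, Quot.mk_surjective⟩)).symm

lemma induce_eq_bot_iff_isIndepSet {s : Set V} : G.induce s = ⊥ ↔ G.IsIndepSet s := by
  rw [SimpleGraph.isIndepSet_iff, SimpleGraph.eq_bot_iff_forall_not_adj]
  exact ⟨fun h u hu v hv _ => h ⟨u, hu⟩ ⟨v, hv⟩,
    fun h u v huv => h u.2 v.2 (SimpleGraph.induce_adj.1 huv).ne huv⟩

lemma isNClique_two_pair_iff [DecidableEq V] {u v : V} : G.IsNClique 2 {u, v} ↔ G.Adj u v := by
  rw [SimpleGraph.isNClique_iff, card_pair_eq_two_iff, coe_pair, SimpleGraph.isClique_pair]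
  exact ⟨fun h => h.1 h.2, fun h => ⟨fun _ => h, h.ne⟩⟩

lemma card_cliqueFinset_two [Fintype V] [DecidableEq V] [DecidableRel G.Adj] :
    #(G.cliqueFinset 2) = #G.edgeFinset := by
  symm
  refine card_nbij Sym2.toFinset ?_ ?_ ?_
  · intro e
    induction e with | _ u v => simp [Sym2.toFinset_mk_eq, isNClique_two_pair_iff]
  · intro e _ e' _ h
    ext v
    rw [← Sym2.mem_toFinset, h, Sym2.mem_toFinset]
  · intro S hS
    have hS : G.IsNClique 2 S := SimpleGraph.mem_cliqueFinset_iff.1 hS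
    obtain ⟨u, v, -, rfl⟩ := card_eq_two.1 hS.card_eq
    exact ⟨s(u, v), by simpa using isNClique_two_pair_iff.1 hS, Sym2.toFinset_mk_eq⟩

/-- The isomorphism, induced by an embedding `f` of vertex types, between the subgraph of
`G.comap f` on `T` and the subgraph of `G` on the image of `T`. -/
noncomputable def comapInduceIso (G : SimpleGraph V) (f : W ↪ V) (T : Finset W) :
    (G.comap f).induce (T : Set W) ≃g G.induce ((T.map f : Finset V) : Set V) where
  toEquiv := (Equiv.Set.image f T f.injective).trans (Equiv.setCongr (coe_map f T).symm)
  map_rel_iff' := Iff.rfl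

end Graphs

section Islands

open Finset

variable {V : Type*} [Fintype V] [DecidableEq V] {G : SimpleGraph V} {S : Finset V}

lemma islandF_eq_of_induce_iso {W : Type*} {H : SimpleGraph W} (φ : G.induce (S : Set V) ≃g H) :
    islandF G S = 2 * Nat.card H.ConnectedComponent + Nat.card H.edgeSet - Nat.card W := by
  have card_eq : Nat.card W = #S := by
    rw [← Nat.card_congr φ.toEquiv, Nat.card_coe_set_eq, Set.ncard_coe_finset]
  rw [islandF, Nat.card_congr φ.connectedComponentEquiv, Nat.card_congr φ.mapEdgeSet, card_eq]

lemma islandF_of_isIndepSet (hS : G.IsIndepSet S) : islandF G S = #S := by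
  rw [islandF, induce_eq_bot_iff_isIndepSet.2 hS, nat_card_connectedComponent_bot,
    SimpleGraph.edgeSet_bot, Nat.card_coe_set_eq, Nat.card_coe_set_eq, Set.ncard_coe_finset,
    Set.ncard_empty]
  ring

lemma islandF_of_isClique (hne : S.Nonempty) (hS : G.IsClique S) :
    islandF G S = 2 + (#S).choose 2 - #S := by
  have : Nonempty (S : Set V) := hne.to_subtype
  have card_edges : Nat.card (⊤ : SimpleGraph (S : Set V)).edgeSet = (#S).choose 2 := by
    rw [Nat.card_eq_fintype_card, ← SimpleGraph.edgeFinset_card,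
      SimpleGraph.card_edgeFinset_top_eq_card_choose_two]
    simp
  rw [islandF, SimpleGraph.induce_eq_top.2 hS,
    nat_card_connectedComponent_eq_one SimpleGraph.connected_top, card_edges]
  norm_num

variable (G)

lemma islandF_univ :
    islandF G univ = 2 * Nat.card G.ConnectedComponent + Nat.card G.edgeSet - Fintype.card V := by
  rw [← Nat.card_eq_fintype_card]
  refine islandF_eq_of_induce_iso ?_
  rw [coe_univ]
  exact SimpleGraph.induceUnivIso G

lemma islandF_comap {W : Type*} [Fintype W] [DecidableEq W] (f : W ↪ V) (T : Finset W) :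
    islandF (G.comap f) T = islandF G (T.map f) :=
  (islandF_eq_of_induce_iso (comapInduceIso G f T)).trans
    (islandF_eq_of_induce_iso SimpleGraph.Iso.refl).symm

lemma islandF_empty : islandF G ∅ = 0 := by
  simp [islandF_of_isIndepSet]

lemma islandF_singleton (v : V) : islandF G {v} = 1 := by
  simp [islandF_of_isIndepSet]

lemma islandF_pair {u v : V} [Decidable (G.Adj u v)] (huv : u ≠ v) :
    islandF G {u, v} = if G.Adj u v then 1 else 2 := by
  split_ifs with h
  · rw [islandF_of_isClique (by simp) (by simp [h]), card_pair huv]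
    norm_num
  · have hindep : G.IsIndepSet (({u, v} : Finset V) : Set V) := by
      simp [SimpleGraph.isIndepSet_iff, Set.pairwise_pair, h, G.adj_comm v u]
    rw [islandF_of_isIndepSet hindep, card_pair huv, Nat.cast_ofNat]

lemma eval_neg_one_islandPoly :
    (islandPoly G).eval (-1) = -∑ T : Finset V, (-1 : ℤ) ^ #T * islandF G T := by
  rw [islandPoly, eval_finsetSum, powerset_univ, ← sum_neg_distrib, sum_filter]
  refine sum_congr rfl fun T _ => ?_
  split_ifs with hT
  · rw [← Nat.sub_add_cancel hT.card_pos]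
    simp [pow_succ, mul_comm]
  · simp [not_nonempty_iff_eq_empty.1 hT, islandF_empty]

/-- The total island count `β_{G[S]}(-1)`, written as a sum over subsets of `S` in order to stay
within the vertex type of `G`; see `eval_neg_one_islandPoly_induce`. -/
noncomputable def totalIslandCount (S : Finset V) : ℤ :=
  -∑ T ∈ S.powerset, (-1 : ℤ) ^ #T * islandF G T

lemma eval_neg_one_islandPoly_induce (S : Finset V) :
    (islandPoly (G.induce (S : Set V))).eval (-1) = totalIslandCount G S := by
  have map_univ : (univ : Finset (S : Set V)).map (Function.Embedding.subtype _) = S := by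
    ext
    simp
  rw [eval_neg_one_islandPoly, totalIslandCount]
  conv_rhs => rw [← map_univ, sum_powerset_map, powerset_univ]
  simp only [islandF_comap, card_map]

lemma sum_neg_one_pow_card_mul_totalIslandCount (S : Finset V) :
    ∑ T ∈ S.powerset, (-1 : ℤ) ^ #T * totalIslandCount G T = -islandF G S := by
  simp only [totalIslandCount, mul_neg, sum_neg_distrib, neg_inj]
  exact sum_powerset_neg_one_pow_card_smul_sum_powerset S (islandF G)

lemma totalIslandCount_empty : totalIslandCount G ∅ = 0 := by
  simp [totalIslandCount, islandF_empty]

lemma totalIslandCount_singleton (v : V) : totalIslandCount G {v} = 1 := by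
  rw [totalIslandCount, ← insert_empty_eq, sum_powerset_insert (notMem_empty v)]
  simp [islandF_empty, islandF_singleton]

lemma totalIslandCount_pair {u v : V} [Decidable (G.Adj u v)] (huv : u ≠ v) :
    totalIslandCount G {u, v} = if G.Adj u v then 1 else 0 := by
  rw [totalIslandCount, sum_powerset_insert (by simpa using huv), ← insert_empty_eq v,
    sum_powerset_insert (notMem_empty v), sum_powerset_insert (notMem_empty v)]
  simp only [powerset_empty, sum_singleton, insert_empty_eq, card_empty, card_singleton,
    card_pair huv, islandF_empty, islandF_singleton, islandF_pair G huv]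
  split_ifs <;> norm_num

lemma sum_powersetCard_two_totalIslandCount :
    ∑ S ∈ univ.powersetCard 2, totalIslandCount G S = Nat.card G.edgeSet := by
  classical
  have count_eq : ∀ S ∈ univ.powersetCard 2,
      totalIslandCount G S = if G.IsNClique 2 S then 1 else 0 := by
    intro S hS
    obtain ⟨u, v, huv, rfl⟩ := card_eq_two.1 (mem_powersetCard.1 hS).2
    simp only [totalIslandCount_pair G huv, isNClique_two_pair_iff]
  have filter_eq : {S ∈ (univ : Finset V).powersetCard 2 | G.IsNClique 2 S} = G.cliqueFinset 2 := by
    ext S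
    simpa using SimpleGraph.IsNClique.card_eq
  rw [sum_congr rfl count_eq, sum_boole, filter_eq, card_cliqueFinset_two,
    SimpleGraph.edgeFinset_card, Nat.card_eq_fintype_card]

theorem euler_characteristic_emergence_general :
    ∑ S ∈ univ.powerset.filter (fun S : Finset V => 3 ≤ #S),
        (-1 : ℤ) ^ #S * (islandPoly (G.induce (S : Set V))).eval (-1)
      = 2 * Nat.card G.ConnectedComponent - 2 * islandF G univ := by
  have size_zero : ∑ S ∈ (univ : Finset V).powersetCard 0, (-1 : ℤ) ^ #S * totalIslandCount G S
      = 0 := by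
    simp [totalIslandCount_empty]
  have size_one : ∑ S ∈ (univ : Finset V).powersetCard 1, (-1 : ℤ) ^ #S * totalIslandCount G S
      = -Fintype.card V := by
    simp [powersetCard_one, totalIslandCount_singleton]
  have size_two : ∑ S ∈ (univ : Finset V).powersetCard 2, (-1 : ℤ) ^ #S * totalIslandCount G S
      = Nat.card G.edgeSet := by
    rw [← sum_powersetCard_two_totalIslandCount]
    refine sum_congr rfl fun S hS => ?_
    rw [(mem_powersetCard.1 hS).2, neg_one_sq, one_mul]
  have inversion := sum_neg_one_pow_card_mul_totalIslandCount G univ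
  rw [sum_powerset_eq_sum_range_powersetCard_add _ _ 3, sum_range_succ, sum_range_succ,
    sum_range_one, size_zero, size_one, size_two] at inversion
  simp only [eval_neg_one_islandPoly_induce]
  linarith [islandF_univ G]

end Islands

theorem euler_characteristic_emergence {V : Type*} [Fintype V] [DecidableEq V]
    (G : SimpleGraph V) (hconn : G.Connected)
    (f : ℤ) (hf : f = 2 + (Nat.card G.edgeSet : ℤ) - (Fintype.card V : ℤ)) :
    ∑ S ∈ Finset.univ.powerset.filter (fun S : Finset V => 3 ≤ S.card),
        (-1 : ℤ) ^ S.card * (islandPoly (G.induce (S : Set V))).eval (-1)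
      = 2 - 2 * f := by
  rw [euler_characteristic_emergence_general, islandF_univ,
    nat_card_connectedComponent_eq_one hconn, hf]
  push_cast
  ring
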